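/- Let A ∈ ℝ^{m × n} be a real matrix with full row rank, i.e., A Aᵀ is invertible. Then, as ε → 0 (through nonzero real values), the matrices (Aᵀ A + ε² I_n)⁻¹ Aᵀ converge to Aᵀ (A Aᵀ)⁻¹; in particular, for every nonzero ε the matrix Aᵀ A + ε² I_n is invertible. -/

import Mathlib

open Matrix Filter

lemma aux_unit {m n : ℕ} (A : Matrix (Fin m) (Fin n) ℝ) (ε : ℝ) (h : ε ≠ 0) :
    IsUnit (Aᵀ * A + ε ^ 2 • (1 : Matrix (Fin n) (Fin n) ℝ)) := by
  have h1 : (Aᵀ * A).PosSemidef := by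
    have := Matrix.posSemidef_conjTranspose_mul_self A
    rwa [Matrix.conjTranspose_eq_transpose_of_trivial] at this
  have h2 : (ε ^ 2 • (1 : Matrix (Fin n) (Fin n) ℝ)).PosDef :=
    Matrix.PosDef.smul Matrix.PosDef.one (by positivity)
  exact (Matrix.PosDef.posSemidef_add h1 h2).isUnit

/-- If `A ∈ ℝ^{m × n}` has full row rank (i.e. `A Aᵀ` is invertible), then for every
nonzero `ε` the matrix `Aᵀ A + ε² I_n` is invertible, and as `ε → 0` through nonzero
values, `(Aᵀ A + ε² I_n)⁻¹ Aᵀ → Aᵀ (A Aᵀ)⁻¹`. -/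
theorem ridge_limit_pinv (m n : ℕ) (hm : 0 < m) (hn : 0 < n)
    (A : Matrix (Fin m) (Fin n) ℝ) (hA : IsUnit (A * Aᵀ)) :
    (∀ ε : ℝ, ε ≠ 0 → IsUnit (Aᵀ * A + ε ^ 2 • (1 : Matrix (Fin n) (Fin n) ℝ))) ∧
    Tendsto (fun ε : ℝ => (Aᵀ * A + ε ^ 2 • (1 : Matrix (Fin n) (Fin n) ℝ))⁻¹ * Aᵀ)
      (nhdsWithin 0 {(0 : ℝ)}ᶜ) (nhds (Aᵀ * (A * Aᵀ)⁻¹)) := by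
  refine ⟨fun ε h => aux_unit A ε h, ?_⟩
  have key : ∀ ε : ℝ, ε ≠ 0 →
      Aᵀ * (A * Aᵀ + ε ^ 2 • (1 : Matrix (Fin m) (Fin m) ℝ))⁻¹ =
      (Aᵀ * A + ε ^ 2 • (1 : Matrix (Fin n) (Fin n) ℝ))⁻¹ * Aᵀ := by
    intro ε h
    have u1 := (Matrix.isUnit_iff_isUnit_det _).1 (aux_unit A ε h)
    have u2 := aux_unit Aᵀ ε h
    rw [Matrix.transpose_transpose] at u2
    have u2 := (Matrix.isUnit_iff_isUnit_det _).1 u2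
    have e : (Aᵀ * A + ε ^ 2 • (1 : Matrix (Fin n) (Fin n) ℝ)) * Aᵀ =
        Aᵀ * (A * Aᵀ + ε ^ 2 • (1 : Matrix (Fin m) (Fin m) ℝ)) := by
      simp [Matrix.add_mul, Matrix.mul_add, Matrix.mul_assoc]
    generalize (Aᵀ * A + ε ^ 2 • (1 : Matrix (Fin n) (Fin n) ℝ)) = P at *
    generalize (A * Aᵀ + ε ^ 2 • (1 : Matrix (Fin m) (Fin m) ℝ)) = Q at *
    calc Aᵀ * Q⁻¹ = P⁻¹ * (P * Aᵀ) * Q⁻¹ := by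
          rw [Matrix.nonsing_inv_mul_cancel_left _ _ u1]
      _ = P⁻¹ * Aᵀ := by
          rw [e, ← Matrix.mul_assoc, Matrix.mul_nonsing_inv_cancel_right _ _ u2]
  have hdet := (Matrix.isUnit_iff_isUnit_det _).1 hA
  have hc : ContinuousAt (fun M : Matrix (Fin m) (Fin m) ℝ => M⁻¹) (A * Aᵀ) := by
    apply continuousAt_matrix_inv
    rw [Ring.inverse_eq_inv']
    exact continuousAt_inv₀ hdet.ne_zero
  have hl : Tendsto (fun ε : ℝ => A * Aᵀ + ε ^ 2 • (1 : Matrix (Fin m) (Fin m) ℝ))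
      (nhdsWithin 0 {(0 : ℝ)}ᶜ) (nhds (A * Aᵀ)) := by
    have : Continuous (fun ε : ℝ => A * Aᵀ + ε ^ 2 • (1 : Matrix (Fin m) (Fin m) ℝ)) := by
      fun_prop
    have := this.tendsto 0
    simp only [ne_eq, OfNat.ofNat_ne_zero, not_false_eq_true, zero_pow, zero_smul,
      add_zero] at this
    exact this.mono_left nhdsWithin_le_nhds
  have hm' : Continuous (fun M : Matrix (Fin m) (Fin m) ℝ => Aᵀ * M) := by fun_prop
  refine ((hm'.tendsto _).comp (hc.tendsto.comp hl)).congr' ?_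
  filter_upwards [self_mem_nhdsWithin] with ε h
  exact key ε h
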